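/- (Theorem 4.1(iii), second case.) Uniformly over all λ ∈ C⁺ and all X ∈ a with x2 ≥ x3 ≥ x1 such that α_λ ≥ β_λ and α_λ α_{X⁺} ≥ β_λ β_{X⁺}, one has E_k(X,λ) ≍ e^{⟨λ,X⁺⟩} / [ (1+α_λ α_{X⁺})^{k} (1+β_λ β_{X⁺})^{k+1} (1+γ_λ γ_{X⁺})^{k+1} ]. -/

import Mathlib

open Real MeasureTheory

/-- The rank-one Dunkl kernel `E_k^{rk1}(x,v)`. -/
noncomputable def Erk1 (k x v : ℝ) : ℝ :=
  (Real.Gamma (k + 1/2) / (Real.sqrt Real.pi * Real.Gamma k)) *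
    ∫ z in (-1 : ℝ)..1, Real.exp (z * x * v) * (1 - z) ^ (k - 1) * (1 + z) ^ k

/-- The normalized modified Bessel function `𝒥_a(y)`, for `a > -1/2`. -/
noncomputable def besselJ (a y : ℝ) : ℝ :=
  (Real.Gamma (a + 1) / (Real.sqrt Real.pi * Real.Gamma (a + 1/2))) *
    ∫ z in (-1 : ℝ)..1, Real.exp (y * z) * (1 - z ^ 2) ^ (a - 1/2)

/-- `W_k(λ,ν)`. -/
noncomputable def Wk (k l1 l2 l3 n1 n2 : ℝ) : ℝ :=
  ((l1 - n1) * (l1 - n2) * (n1 - l2) * (l2 - n2) * (n1 - l3) * (n2 - l3)) ^ (k - 1)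

/-- `V(λ) = (λ1-λ2)(λ1-λ3)(λ2-λ3)`. -/
def Vlam (l1 l2 l3 : ℝ) : ℝ := (l1 - l2) * (l1 - l3) * (l2 - l3)

/-- The `A₂` Dunkl kernel `E_k(X,λ)`, defined via the rank-one kernel formula. -/
noncomputable def EkA2 (k x1 x2 x3 l1 l2 l3 : ℝ) : ℝ :=
  (3 * Real.Gamma (3 * k) / (Vlam l1 l2 l3 ^ (2 * k) * Real.Gamma k ^ 2)) *
    ∫ n2 in l3..l2, ∫ n1 in l2..l1,
      ((n1 - l2) * (l1 - n2) * Erk1 k ((x1 - x2) / 2) (n1 - n2)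
        + (l1 - n1) * (l2 - n2) * Erk1 k (-(x1 - x2) / 2) (n1 - n2))
      * ((n1 - l3) * (n2 - l3)) * Real.exp ((x1 + x2 - 2 * x3) * (n1 + n2) / 2)
      * Wk k l1 l2 l3 n1 n2


lemma rpow_cmp (r : ℝ) : ∃ M : ℝ, 0 < M ∧ ∀ a y : ℝ, 0 < a → a / 2 ≤ y → y ≤ 2 * a →
    M⁻¹ * a ^ r ≤ y ^ r ∧ y ^ r ≤ M * a ^ r := by
  refine ⟨(2:ℝ) ^ |r|, by positivity, ?_⟩
  intro a y ha h1 h2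
  have hy : 0 < y := by linarith
  have key : ∀ t : ℝ, 1/2 ≤ t → t ≤ 2 → ((2:ℝ) ^ |r|)⁻¹ ≤ t ^ r ∧ t ^ r ≤ (2:ℝ) ^ |r| := by
    intro t ht1 ht2
    have ht : 0 < t := by linarith
    rw [← Real.rpow_neg (by norm_num), Real.rpow_def_of_pos ht, Real.rpow_def_of_pos (by norm_num : (0:ℝ) < 2),
      Real.rpow_def_of_pos (by norm_num : (0:ℝ) < 2)]
    have hl : |Real.log t| ≤ Real.log 2 := by
      rw [abs_le]
      constructor
      · have := Real.log_le_log (by norm_num) ht1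
        rw [one_div, Real.log_inv] at this; exact this
      · exact Real.log_le_log ht ht2
    have hh : |Real.log t * r| ≤ Real.log 2 * |r| := by
      rw [abs_mul]; gcongr
    have := abs_le.1 hh
    constructor
    · apply Real.exp_le_exp.2; linarith
    · apply Real.exp_le_exp.2; linarith
  have := key (y / a) (by rw [le_div_iff₀ ha]; linarith) (by rw [div_le_iff₀ ha]; linarith)
  have e : y ^ r = (y / a) ^ r * a ^ r := by
    rw [← Real.mul_rpow (by positivity) ha.le]; congr 1; field_simp
  have hp : 0 < a ^ r := Real.rpow_pos_of_pos ha r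
  rw [e]
  constructor
  · exact mul_le_mul_of_nonneg_right this.1 hp.le
  · exact mul_le_mul_of_nonneg_right this.2 hp.le

lemma exp_dec (m : ℝ) (hm : 0 < m) : ∃ M : ℝ, 0 < M ∧ ∀ t : ℝ, 0 ≤ t →
    Real.exp (-(t / 2)) ≤ M / (1 + t) ^ m := by
  refine ⟨(2 * m) ^ m * Real.exp (1/2), by positivity, ?_⟩
  intro t ht
  rw [le_div_iff₀ (by positivity)]
  have h1 : (1 + t) / (2 * m) ≤ Real.exp ((1 + t) / (2 * m)) := by
    have := Real.add_one_le_exp ((1 + t) / (2 * m)); linarith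
  have h2 := Real.rpow_le_rpow (by positivity) h1 hm.le
  rw [Real.div_rpow (by positivity) (by positivity), ← Real.exp_mul, div_le_iff₀ (by positivity)] at h2
  have e : (1 + t) / (2 * m) * m = 1/2 + t/2 := by field_simp
  rw [e, Real.exp_add] at h2
  calc Real.exp (-(t/2)) * (1+t)^m ≤ Real.exp (-(t/2)) * (Real.exp (1/2) * Real.exp (t/2) * (2*m)^m) := by gcongr
    _ = (Real.exp (-(t/2)) * Real.exp (t/2)) * ((2*m)^m * Real.exp (1/2)) := by ring
    _ = _ := by rw [← Real.exp_add]; simp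

lemma int_rpow (m a : ℝ) (hm : 0 < m) :
    IntervalIntegrable (fun u : ℝ => u ^ (m - 1)) volume 0 a :=
  intervalIntegral.intervalIntegrable_rpow' (by linarith)

lemma int_rpow' (n a : ℝ) (hn : 0 < n) :
    IntervalIntegrable (fun u : ℝ => (a - u) ^ (n - 1)) volume 0 a := by
  have := (int_rpow n a hn).comp_sub_left a
  simpa using this.symm

lemma integral_rpow1 (m a : ℝ) (hm : 0 < m) : ∫ u in (0:ℝ)..a, u ^ (m - 1) = a ^ m / m := by
  rw [integral_rpow (Or.inl (by linarith))]
  simp [Real.zero_rpow hm.ne']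

lemma integral_rpow2 (n a : ℝ) (hn : 0 < n) : ∫ u in (0:ℝ)..a, (a - u) ^ (n - 1) = a ^ n / n := by
  rw [intervalIntegral.integral_comp_sub_left (fun u => u ^ (n-1)) a]
  simp only [sub_self, sub_zero]
  exact integral_rpow1 n a hn

lemma int_exp_rpow (m A a : ℝ) (hm : 0 < m) :
    IntervalIntegrable (fun u : ℝ => Real.exp (-(A * u)) * u ^ (m - 1)) volume 0 a := by
  apply (int_rpow m a hm).continuousOn_mul
  fun_prop

lemma integral_exp_rpow (m : ℝ) (hm : 0 < m) (a A : ℝ) (ha : 0 < a) (hA : 0 ≤ A) :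
    ∫ u in (0:ℝ)..a, Real.exp (-(A * u)) * u ^ (m - 1) ≤
      Real.exp 1 * Real.Gamma m * (a ^ m / (1 + a * A) ^ m) := by
  have hr : 0 < A + 1 / a := by positivity
  have hG := Real.integral_rpow_mul_exp_neg_mul_Ioi hm hr
  have hI : IntegrableOn (fun t : ℝ => t ^ (m - 1) * Real.exp (-((A + 1 / a) * t))) (Set.Ioi 0) := by
    by_contra h
    have := MeasureTheory.integral_undef h
    rw [this] at hG
    have : 0 < (1 / (A + 1/a)) ^ m * Real.Gamma m := by
      have := Real.Gamma_pos_of_pos hm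
      positivity
    linarith
  have e1 : (1 / (A + 1 / a)) ^ m = a ^ m / (1 + a * A) ^ m := by
    rw [← Real.div_rpow ha.le (by positivity)]; congr 1; field_simp; ring
  rw [intervalIntegral.integral_of_le ha.le]
  calc ∫ u in Set.Ioc 0 a, Real.exp (-(A * u)) * u ^ (m - 1)
      ≤ ∫ u in Set.Ioc 0 a, Real.exp 1 * (u ^ (m - 1) * Real.exp (-((A + 1 / a) * u))) := by
        apply MeasureTheory.setIntegral_mono_on
        · exact (intervalIntegrable_iff_integrableOn_Ioc_of_le ha.le).1 (int_exp_rpow m A a hm)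
        · exact (hI.mono_set (fun x hx => hx.1)).const_mul _
        · exact measurableSet_Ioc
        · intro u hu
          have : 0 ≤ u ^ (m-1) := Real.rpow_nonneg hu.1.le _
          have h2 : Real.exp (-(A * u)) ≤ Real.exp 1 * Real.exp (-((A + 1 / a) * u)) := by
            rw [← Real.exp_add]; apply Real.exp_le_exp.2
            have : u / a ≤ 1 := by rw [div_le_one ha]; exact hu.2
            have e : (A + 1/a) * u = A * u + u / a := by ring
            rw [e]; linarith
          calc _ ≤ (Real.exp 1 * Real.exp (-((A + 1 / a) * u))) * u ^ (m-1) := by gcongr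
            _ = _ := by ring
    _ = Real.exp 1 * ∫ u in Set.Ioc 0 a, (u ^ (m - 1) * Real.exp (-((A + 1 / a) * u))) := by
        rw [MeasureTheory.integral_const_mul]
    _ ≤ Real.exp 1 * ∫ u in Set.Ioi 0, (u ^ (m - 1) * Real.exp (-((A + 1 / a) * u))) := by
        refine mul_le_mul_of_nonneg_left ?_ (Real.exp_pos _).le
        apply MeasureTheory.setIntegral_mono_set hI
        · filter_upwards [self_mem_ae_restrict measurableSet_Ioi] with u hu
          have : (0:ℝ) ≤ u ^ (m-1) := Real.rpow_nonneg (le_of_lt hu) _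
          simp only [Pi.zero_apply]; positivity
        · exact Filter.Eventually.of_forall (fun x hx => hx.1)
    _ = _ := by rw [hG, e1]; ring

lemma J_bound (m n : ℝ) (hm : 0 < m) (hn : 0 < n) : ∃ C : ℝ, 0 < C ∧ ∀ a A : ℝ, 0 < a → 0 ≤ A →
    IntervalIntegrable (fun u : ℝ => Real.exp (-(A * u)) * u ^ (m - 1) * (a - u) ^ (n - 1)) volume 0 a ∧
    C⁻¹ * (a ^ (m + n - 1) / (1 + a * A) ^ m) ≤
      ∫ u in (0:ℝ)..a, Real.exp (-(A * u)) * u ^ (m - 1) * (a - u) ^ (n - 1) ∧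
    ∫ u in (0:ℝ)..a, Real.exp (-(A * u)) * u ^ (m - 1) * (a - u) ^ (n - 1) ≤
      C * (a ^ (m + n - 1) / (1 + a * A) ^ m) := by
  obtain ⟨M1, hM1, H1⟩ := rpow_cmp (n - 1)
  obtain ⟨M2, hM2, H2⟩ := rpow_cmp (m - 1)
  obtain ⟨M3, hM3, H3⟩ := exp_dec m hm
  have hΓ := Real.Gamma_pos_of_pos hm
  set C1 : ℝ := M1 * (Real.exp 1 * Real.Gamma m) + M2 * (M3 / n) with hC1
  set C2 : ℝ := Real.exp (-1) * M1⁻¹ * ((1/2) ^ m / m) with hC2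
  have hC1p : 0 < C1 := by positivity
  have hC2p : 0 < C2 := by positivity
  refine ⟨C1 + C2⁻¹, by positivity, ?_⟩
  intro a A ha hA
  have hub : ∀ u ∈ Set.Ioo 0 a, Real.exp (-(A * u)) * u ^ (m - 1) * (a - u) ^ (n - 1) ≤
      M1 * a ^ (n - 1) * (Real.exp (-(A * u)) * u ^ (m - 1)) +
      M2 * a ^ (m - 1) * Real.exp (-(a * A / 2)) * (a - u) ^ (n - 1) := by
    intro u hu
    have p1 : 0 < u ^ (m - 1) := Real.rpow_pos_of_pos hu.1 _
    have p2 : 0 < (a - u) ^ (n - 1) := Real.rpow_pos_of_pos (by linarith [hu.2]) _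
    have p3 : 0 < a ^ (n - 1) := Real.rpow_pos_of_pos ha _
    have p4 : 0 < a ^ (m - 1) := Real.rpow_pos_of_pos ha _
    rcases le_total u (a / 2) with h | h
    · have := (H1 a (a - u) ha (by linarith) (by linarith [hu.1])).2
      calc _ ≤ Real.exp (-(A * u)) * u ^ (m - 1) * (M1 * a ^ (n - 1)) := by gcongr
        _ = M1 * a ^ (n - 1) * (Real.exp (-(A * u)) * u ^ (m - 1)) := by ring
        _ ≤ _ := by
          apply le_add_of_nonneg_right; positivity
    · have := (H2 a u ha h (by linarith [hu.2])).2
      have h4 : Real.exp (-(A * u)) ≤ Real.exp (-(a * A / 2)) := by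
        apply Real.exp_le_exp.2; nlinarith
      calc _ ≤ Real.exp (-(a * A / 2)) * (M2 * a ^ (m - 1)) * (a - u) ^ (n - 1) := by gcongr
        _ = M2 * a ^ (m - 1) * Real.exp (-(a * A / 2)) * (a - u) ^ (n - 1) := by ring
        _ ≤ _ := by
          apply le_add_of_nonneg_left; positivity
  have hbi : IntervalIntegrable (fun u => M1 * a ^ (n - 1) * (Real.exp (-(A * u)) * u ^ (m - 1)) +
      M2 * a ^ (m - 1) * Real.exp (-(a * A / 2)) * (a - u) ^ (n - 1)) volume 0 a :=
    ((int_exp_rpow m A a hm).const_mul _).add ((int_rpow' n a hn).const_mul _)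
  have hint : IntervalIntegrable (fun u : ℝ => Real.exp (-(A * u)) * u ^ (m - 1) * (a - u) ^ (n - 1)) volume 0 a := by
    rw [intervalIntegrable_iff_integrableOn_Ioo_of_le ha.le] at hbi ⊢
    apply MeasureTheory.Integrable.mono' hbi
    · apply Measurable.aestronglyMeasurable; fun_prop
    · filter_upwards [self_mem_ae_restrict measurableSet_Ioo] with u hu
      rw [Real.norm_of_nonneg]
      · exact hub u hu
      · have p1 : 0 < u ^ (m - 1) := Real.rpow_pos_of_pos hu.1 _
        have p2 : 0 < (a - u) ^ (n - 1) := Real.rpow_pos_of_pos (by linarith [hu.2]) _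
        positivity
  have eqa : a ^ (m + n - 1) = a ^ m * a ^ (n - 1) := by
    rw [← Real.rpow_add ha]; congr 1; ring
  have eqb : a ^ (m + n - 1) = a ^ (m - 1) * a ^ n := by
    rw [← Real.rpow_add ha]; congr 1; ring
  have pq : 0 < a ^ (m + n - 1) / (1 + a * A) ^ m := by positivity
  have p3 : 0 < a ^ (n - 1) := Real.rpow_pos_of_pos ha _
  have p4 : 0 < a ^ (m - 1) := Real.rpow_pos_of_pos ha _
  refine ⟨hint, ?_, ?_⟩
  · have hd1 : 0 < 1 + a * A := by positivity
    set d := a / (2 * (1 + a * A)) with hd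
    have hdp : 0 < d := by positivity
    have hda : d ≤ a / 2 := by
      rw [hd]
      apply div_le_div_of_nonneg_left ha.le (by norm_num)
      nlinarith [mul_nonneg ha.le hA]
    have hdA : A * d ≤ 1 := by
      rw [hd, mul_div_assoc', div_le_one (by positivity)]
      nlinarith [mul_nonneg ha.le hA]
    have s1 : IntervalIntegrable (fun u : ℝ => Real.exp (-(A * u)) * u ^ (m - 1) * (a - u) ^ (n - 1)) volume 0 d :=
      hint.mono_set (by rw [Set.uIcc_of_le hdp.le, Set.uIcc_of_le ha.le]; exact Set.Icc_subset_Icc_right (by linarith))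
    have s2 : ∫ u in (0:ℝ)..d, (Real.exp (-1) * M1⁻¹ * a ^ (n - 1)) * u ^ (m - 1) ≤
        ∫ u in (0:ℝ)..d, Real.exp (-(A * u)) * u ^ (m - 1) * (a - u) ^ (n - 1) := by
      apply intervalIntegral.integral_mono_on_of_le_Ioo hdp.le ((int_rpow m d hm).const_mul _) s1
      intro u hu
      have p1 : 0 < u ^ (m - 1) := Real.rpow_pos_of_pos hu.1 _
      have := (H1 a (a - u) ha (by linarith [hu.2]) (by linarith [hu.1])).1
      have h4 : Real.exp (-1) ≤ Real.exp (-(A * u)) := by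
        apply Real.exp_le_exp.2
        have : A * u ≤ A * d := by gcongr; exact hu.2.le
        linarith
      calc _ = Real.exp (-1) * u ^ (m - 1) * (M1⁻¹ * a ^ (n - 1)) := by ring
        _ ≤ _ := by gcongr
    have s3 : ∫ u in (0:ℝ)..d, Real.exp (-(A * u)) * u ^ (m - 1) * (a - u) ^ (n - 1) ≤
        ∫ u in (0:ℝ)..a, Real.exp (-(A * u)) * u ^ (m - 1) * (a - u) ^ (n - 1) := by
      apply intervalIntegral.integral_mono_interval le_rfl hdp.le (by linarith) _ hint
      filter_upwards [self_mem_ae_restrict measurableSet_Ioc] with u hu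
      have p1 : 0 ≤ u ^ (m - 1) := Real.rpow_nonneg hu.1.le _
      have p2 : 0 ≤ (a - u) ^ (n - 1) := Real.rpow_nonneg (by linarith [hu.2]) _
      simp only [Pi.zero_apply]; positivity
    refine le_trans ?_ (s2.trans s3)
    rw [intervalIntegral.integral_const_mul, integral_rpow1 m d hm]
    have hdm : d ^ m = (1/2) ^ m * (a ^ m / (1 + a * A) ^ m) := by
      rw [← Real.div_rpow ha.le hd1.le, ← Real.mul_rpow (by norm_num) (by positivity)]
      congr 1; rw [hd]; field_simp
    have e : Real.exp (-1) * M1⁻¹ * a ^ (n - 1) * (d ^ m / m) = C2 * (a ^ (m + n - 1) / (1 + a * A) ^ m) := by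
      rw [hdm, eqa, hC2]; ring
    rw [e]
    gcongr
    rw [inv_le_comm₀ (by positivity) hC2p]
    linarith
  · have hI2 := integral_exp_rpow m hm a A ha hA
    have h3 := H3 (a * A) (by positivity)
    calc _ ≤ ∫ u in (0:ℝ)..a, (M1 * a ^ (n - 1) * (Real.exp (-(A * u)) * u ^ (m - 1)) +
            M2 * a ^ (m - 1) * Real.exp (-(a * A / 2)) * (a - u) ^ (n - 1)) :=
          intervalIntegral.integral_mono_on_of_le_Ioo ha.le hint hbi hub
      _ = M1 * a ^ (n - 1) * (∫ u in (0:ℝ)..a, (Real.exp (-(A * u)) * u ^ (m - 1))) +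
            M2 * a ^ (m - 1) * Real.exp (-(a * A / 2)) * (a ^ n / n) := by
          rw [intervalIntegral.integral_add ((int_exp_rpow m A a hm).const_mul _) ((int_rpow' n a hn).const_mul _),
            intervalIntegral.integral_const_mul, intervalIntegral.integral_const_mul, integral_rpow2 n a hn]
      _ ≤ M1 * a ^ (n - 1) * (Real.exp 1 * Real.Gamma m * (a ^ m / (1 + a * A) ^ m)) +
            M2 * a ^ (m - 1) * (M3 / (1 + a * A) ^ m) * (a ^ n / n) := by gcongr
      _ = M1 * (Real.exp 1 * Real.Gamma m) * (a ^ m * a ^ (n-1) / (1 + a * A) ^ m) +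
            M2 * (M3 / n) * (a ^ (m - 1) * a ^ n / (1 + a * A) ^ m) := by ring
      _ = C1 * (a ^ (m + n - 1) / (1 + a * A) ^ m) := by
          rw [← eqa, ← eqb, hC1]; ring
      _ ≤ _ := by
          gcongr
          have : 0 < C2⁻¹ := by positivity
          linarith

lemma Erk1_pos (k : ℝ) (hk : 0 < k) : ∃ C : ℝ, 0 < C ∧ ∀ x v y : ℝ, x * v = y → 0 ≤ y →
    0 ≤ Erk1 k x v ∧ Erk1 k x v ≤ C * (Real.exp y / (1 + 2 * y) ^ k) := by
  obtain ⟨C, hC, H⟩ := J_bound k (k + 1) hk (by linarith)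
  have g1 := Real.Gamma_pos_of_pos hk
  have g2 := Real.Gamma_pos_of_pos (by linarith : 0 < k + 1/2)
  set c0 := Real.Gamma (k + 1/2) / (Real.sqrt Real.pi * Real.Gamma k) with hc0
  have c0p : 0 < c0 := by positivity
  refine ⟨c0 * C * 2 ^ (k + (k + 1) - 1), by positivity, ?_⟩
  intro x v y hxy hy
  obtain ⟨h1, h2, h3⟩ := H 2 y (by norm_num) hy
  have e : ∫ z in (-1 : ℝ)..1, Real.exp (z * x * v) * (1 - z) ^ (k - 1) * (1 + z) ^ k =
      Real.exp y * ∫ u in (0:ℝ)..2, Real.exp (-(y * u)) * u ^ (k - 1) * (2 - u) ^ (k + 1 - 1) := by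
    rw [← intervalIntegral.integral_const_mul]
    have := intervalIntegral.integral_comp_sub_left (a := 0) (b := 2)
      (fun z : ℝ => Real.exp (z * x * v) * (1 - z) ^ (k - 1) * (1 + z) ^ k) 1
    norm_num at this
    rw [← this]
    apply intervalIntegral.integral_congr
    intro u hu
    have e1 : (1 - u) * x * v = y + -(y * u) := by rw [mul_assoc, hxy]; ring
    have e2 : 1 + (1 - u) = 2 - u := by ring
    have e3 : k + 1 - 1 = k := by ring
    simp only [e1, e2, e3, Real.exp_add]
    ring
  unfold Erk1
  rw [← hc0, e]
  have q0 : 0 ≤ C⁻¹ * (2 ^ (k + (k + 1) - 1) / (1 + 2 * y) ^ k) := by positivity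
  have q1 := q0.trans h2
  refine ⟨by positivity, ?_⟩
  calc _ ≤ c0 * (Real.exp y * (C * (2 ^ (k + (k + 1) - 1) / (1 + 2 * y) ^ k))) := by gcongr
    _ = _ := by ring

lemma Erk1_neg (k : ℝ) (hk : 0 < k) : ∃ C : ℝ, 0 < C ∧ ∀ x v y : ℝ, x * v = -y → 0 ≤ y →
    C⁻¹ * (Real.exp y / (1 + 2 * y) ^ (k + 1)) ≤ Erk1 k x v ∧
    Erk1 k x v ≤ C * (Real.exp y / (1 + 2 * y) ^ (k + 1)) := by
  obtain ⟨C, hC, H⟩ := J_bound (k + 1) k (by linarith) hk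
  have g1 := Real.Gamma_pos_of_pos hk
  have g2 := Real.Gamma_pos_of_pos (by linarith : 0 < k + 1/2)
  set c0 := Real.Gamma (k + 1/2) / (Real.sqrt Real.pi * Real.Gamma k) with hc0
  have c0p : 0 < c0 := by positivity
  set A1 := c0 * C * 2 ^ (k + 1 + k - 1) with hA1
  set A2 := c0 * C⁻¹ * 2 ^ (k + 1 + k - 1) with hA2
  have A1p : 0 < A1 := by positivity
  have A2p : 0 < A2 := by positivity
  refine ⟨A1 + A2⁻¹, by positivity, ?_⟩
  intro x v y hxy hy
  obtain ⟨h1, h2, h3⟩ := H 2 y (by norm_num) hy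
  have e : ∫ z in (-1 : ℝ)..1, Real.exp (z * x * v) * (1 - z) ^ (k - 1) * (1 + z) ^ k =
      Real.exp y * ∫ u in (0:ℝ)..2, Real.exp (-(y * u)) * u ^ (k + 1 - 1) * (2 - u) ^ (k - 1) := by
    rw [← intervalIntegral.integral_const_mul]
    have := intervalIntegral.integral_comp_sub_right (a := 0) (b := 2)
      (fun z : ℝ => Real.exp (z * x * v) * (1 - z) ^ (k - 1) * (1 + z) ^ k) 1
    norm_num at this
    rw [← this]
    apply intervalIntegral.integral_congr
    intro u hu
    have e1 : (u - 1) * x * v = y + -(y * u) := by rw [mul_assoc, hxy]; ring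
    have e2 : 1 - (u - 1) = 2 - u := by ring
    have e3 : k + 1 - 1 = k := by ring
    simp only [e1, e2, e3, Real.exp_add]
    ring_nf
  unfold Erk1
  rw [← hc0, e]
  have R : 0 ≤ Real.exp y / (1 + 2 * y) ^ (k + 1) := by positivity
  constructor
  · calc _ ≤ A2 * (Real.exp y / (1 + 2 * y) ^ (k + 1)) := by
          gcongr
          rw [inv_le_comm₀ (by positivity) A2p]; linarith
      _ = c0 * (Real.exp y * (C⁻¹ * (2 ^ (k + 1 + k - 1) / (1 + 2 * y) ^ (k + 1)))) := by rw [hA2]; ring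
      _ ≤ _ := by gcongr
  · calc _ ≤ c0 * (Real.exp y * (C * (2 ^ (k + 1 + k - 1) / (1 + 2 * y) ^ (k + 1)))) := by gcongr
      _ = A1 * (Real.exp y / (1 + 2 * y) ^ (k + 1)) := by rw [hA1]; ring
      _ ≤ _ := by
          have : 0 < A2⁻¹ := by positivity
          gcongr; linarith

lemma Erk1_meas (k x : ℝ) : Measurable (fun v => Erk1 k x v) := by
  unfold Erk1
  apply Measurable.const_mul
  simp only [intervalIntegral.integral_of_le (by norm_num : (-1:ℝ) ≤ 1)]
  have : StronglyMeasurable (Function.uncurry (fun v z : ℝ =>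
      Real.exp (z * x * v) * (1 - z) ^ (k - 1) * (1 + z) ^ k)) := by
    apply Measurable.stronglyMeasurable
    unfold Function.uncurry
    fun_prop
  exact (this.integral_prod_right (ν := volume.restrict (Set.Ioc (-1) 1))).measurable

lemma two_dim (F : ℝ → ℝ → ℝ) (hF : Measurable (Function.uncurry F)) (l1 l2 l3 : ℝ)
    (h12 : l2 ≤ l1) (h23 : l3 ≤ l2) (c0 c1 c2 c3 : ℝ) (g0 h0 g1 h1 g2 h2 g3 h3 : ℝ → ℝ)
    (ig0 : IntervalIntegrable g0 volume l3 l2) (ih0 : IntervalIntegrable h0 volume l2 l1)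
    (ig1 : IntervalIntegrable g1 volume l3 l2) (ih1 : IntervalIntegrable h1 volume l2 l1)
    (ig2 : IntervalIntegrable g2 volume l3 l2) (ih2 : IntervalIntegrable h2 volume l2 l1)
    (ig3 : IntervalIntegrable g3 volume l3 l2) (ih3 : IntervalIntegrable h3 volume l2 l1)
    (nn : ∀ n2 ∈ Set.Ioo l3 l2, ∀ n1 ∈ Set.Ioo l2 l1, 0 ≤ F n2 n1)
    (lo : ∀ n2 ∈ Set.Ioo l3 l2, ∀ n1 ∈ Set.Ioo l2 l1, c0 * g0 n2 * h0 n1 ≤ F n2 n1)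
    (up : ∀ n2 ∈ Set.Ioo l3 l2, ∀ n1 ∈ Set.Ioo l2 l1,
      F n2 n1 ≤ c1 * g1 n2 * h1 n1 + c2 * g2 n2 * h2 n1 + c3 * g3 n2 * h3 n1) :
    c0 * (∫ n2 in l3..l2, g0 n2) * (∫ n1 in l2..l1, h0 n1) ≤ ∫ n2 in l3..l2, ∫ n1 in l2..l1, F n2 n1 ∧
    ∫ n2 in l3..l2, ∫ n1 in l2..l1, F n2 n1 ≤
      c1 * (∫ n2 in l3..l2, g1 n2) * (∫ n1 in l2..l1, h1 n1) +
      c2 * (∫ n2 in l3..l2, g2 n2) * (∫ n1 in l2..l1, h2 n1) +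
      c3 * (∫ n2 in l3..l2, g3 n2) * (∫ n1 in l2..l1, h3 n1) := by
  have iub : ∀ n2, IntervalIntegrable (fun n1 => c1 * g1 n2 * h1 n1 + c2 * g2 n2 * h2 n1 + c3 * g3 n2 * h3 n1)
      volume l2 l1 := fun n2 =>
    ((ih1.const_mul _).add (ih2.const_mul _)).add (ih3.const_mul _)
  have iin : ∀ n2 ∈ Set.Ioo l3 l2, IntervalIntegrable (F n2) volume l2 l1 := by
    intro n2 hn2
    have := iub n2
    rw [intervalIntegrable_iff_integrableOn_Ioo_of_le h12] at this ⊢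
    apply MeasureTheory.Integrable.mono' this
    · exact (hF.comp (measurable_const.prodMk measurable_id)).aestronglyMeasurable
    · filter_upwards [self_mem_ae_restrict measurableSet_Ioo] with u hu
      rw [Real.norm_of_nonneg (nn n2 hn2 u hu)]
      exact up n2 hn2 u hu
  have eub : ∀ n2, ∫ n1 in l2..l1, (c1 * g1 n2 * h1 n1 + c2 * g2 n2 * h2 n1 + c3 * g3 n2 * h3 n1) =
      (c1 * ∫ n1 in l2..l1, h1 n1) * g1 n2 + (c2 * ∫ n1 in l2..l1, h2 n1) * g2 n2
        + (c3 * ∫ n1 in l2..l1, h3 n1) * g3 n2 := by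
    intro n2
    rw [intervalIntegral.integral_add ((ih1.const_mul _).add (ih2.const_mul _)) (ih3.const_mul _),
      intervalIntegral.integral_add (ih1.const_mul _) (ih2.const_mul _),
      intervalIntegral.integral_const_mul, intervalIntegral.integral_const_mul,
      intervalIntegral.integral_const_mul]
    ring
  have inu : ∀ n2 ∈ Set.Ioo l3 l2, ∫ n1 in l2..l1, F n2 n1 ≤
      (c1 * ∫ n1 in l2..l1, h1 n1) * g1 n2 + (c2 * ∫ n1 in l2..l1, h2 n1) * g2 n2
        + (c3 * ∫ n1 in l2..l1, h3 n1) * g3 n2 := by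
    intro n2 hn2
    rw [← eub]
    exact intervalIntegral.integral_mono_on_of_le_Ioo h12 (iin n2 hn2) (iub n2) (up n2 hn2)
  have inl : ∀ n2 ∈ Set.Ioo l3 l2, (c0 * ∫ n1 in l2..l1, h0 n1) * g0 n2 ≤ ∫ n1 in l2..l1, F n2 n1 := by
    intro n2 hn2
    calc _ = ∫ n1 in l2..l1, c0 * g0 n2 * h0 n1 := by
          rw [intervalIntegral.integral_const_mul]; ring
      _ ≤ _ := intervalIntegral.integral_mono_on_of_le_Ioo h12 (ih0.const_mul _) (iin n2 hn2) (lo n2 hn2)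
  have inn : ∀ n2 ∈ Set.Ioo l3 l2, 0 ≤ ∫ n1 in l2..l1, F n2 n1 := by
    intro n2 hn2
    have := intervalIntegral.integral_mono_on_of_le_Ioo h12
      (intervalIntegrable_const (c := (0:ℝ)) (μ := volume)) (iin n2 hn2) (nn n2 hn2)
    simpa using this
  have iuo : IntervalIntegrable (fun n2 => (c1 * ∫ n1 in l2..l1, h1 n1) * g1 n2 + (c2 * ∫ n1 in l2..l1, h2 n1) * g2 n2
        + (c3 * ∫ n1 in l2..l1, h3 n1) * g3 n2) volume l3 l2 :=
    ((ig1.const_mul _).add (ig2.const_mul _)).add (ig3.const_mul _)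
  have iout : IntervalIntegrable (fun n2 => ∫ n1 in l2..l1, F n2 n1) volume l3 l2 := by
    have := iuo
    rw [intervalIntegrable_iff_integrableOn_Ioo_of_le h23] at this ⊢
    apply MeasureTheory.Integrable.mono' this
    · simp only [intervalIntegral.integral_of_le h12]
      exact (hF.stronglyMeasurable.integral_prod_right (ν := volume.restrict (Set.Ioc l2 l1))).aestronglyMeasurable
    · filter_upwards [self_mem_ae_restrict measurableSet_Ioo] with u hu
      rw [Real.norm_of_nonneg (inn u hu)]
      exact inu u hu
  constructor
  · calc _ = ∫ n2 in l3..l2, (c0 * ∫ n1 in l2..l1, h0 n1) * g0 n2 := by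
          rw [intervalIntegral.integral_const_mul]; ring
      _ ≤ _ := intervalIntegral.integral_mono_on_of_le_Ioo h23 (ig0.const_mul _) iout inl
  · calc _ ≤ _ := intervalIntegral.integral_mono_on_of_le_Ioo h23 iout iuo inu
      _ = _ := by
        rw [intervalIntegral.integral_add ((ig1.const_mul _).add (ig2.const_mul _)) (ig3.const_mul _),
          intervalIntegral.integral_add (ig1.const_mul _) (ig2.const_mul _),
          intervalIntegral.integral_const_mul, intervalIntegral.integral_const_mul,
          intervalIntegral.integral_const_mul]
        ring

lemma J1_bound (m n : ℝ) (hm : 0 < m) (hn : 0 < n) : ∃ C : ℝ, 0 < C ∧ ∀ l1 l2 A : ℝ, l2 < l1 → 0 ≤ A →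
    IntervalIntegrable (fun s : ℝ => Real.exp (-(A * (l1 - s))) * (l1 - s) ^ (m - 1) * (s - l2) ^ (n - 1)) volume l2 l1 ∧
    C⁻¹ * ((l1 - l2) ^ (m + n - 1) / (1 + (l1 - l2) * A) ^ m) ≤
      ∫ s in l2..l1, Real.exp (-(A * (l1 - s))) * (l1 - s) ^ (m - 1) * (s - l2) ^ (n - 1) ∧
    ∫ s in l2..l1, Real.exp (-(A * (l1 - s))) * (l1 - s) ^ (m - 1) * (s - l2) ^ (n - 1) ≤
      C * ((l1 - l2) ^ (m + n - 1) / (1 + (l1 - l2) * A) ^ m) := by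
  obtain ⟨C, hC, H⟩ := J_bound m n hm hn
  refine ⟨C, hC, ?_⟩
  intro l1 l2 A h12 hA
  obtain ⟨h1, h2, h3⟩ := H (l1 - l2) A (by linarith) hA
  have e : (fun s : ℝ => Real.exp (-(A * (l1 - s))) * (l1 - s) ^ (m - 1) * (s - l2) ^ (n - 1)) =
      fun s => (fun u : ℝ => Real.exp (-(A * u)) * u ^ (m - 1) * (l1 - l2 - u) ^ (n - 1)) (l1 - s) := by
    funext s
    have : l1 - l2 - (l1 - s) = s - l2 := by ring
    simp only [this]
  rw [e, intervalIntegral.integral_comp_sub_left (fun u : ℝ => Real.exp (-(A * u)) * u ^ (m - 1) * (l1 - l2 - u) ^ (n - 1)) l1, sub_self]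
  refine ⟨?_, h2, h3⟩
  have := (h1.comp_sub_left l1).symm
  simpa using this

lemma J2_bound (m n : ℝ) (hm : 0 < m) (hn : 0 < n) : ∃ C : ℝ, 0 < C ∧ ∀ l2 l3 B : ℝ, l3 < l2 → 0 ≤ B →
    IntervalIntegrable (fun s : ℝ => Real.exp (-(B * (s - l3))) * (s - l3) ^ (m - 1) * (l2 - s) ^ (n - 1)) volume l3 l2 ∧
    C⁻¹ * ((l2 - l3) ^ (m + n - 1) / (1 + (l2 - l3) * B) ^ m) ≤
      ∫ s in l3..l2, Real.exp (-(B * (s - l3))) * (s - l3) ^ (m - 1) * (l2 - s) ^ (n - 1) ∧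
    ∫ s in l3..l2, Real.exp (-(B * (s - l3))) * (s - l3) ^ (m - 1) * (l2 - s) ^ (n - 1) ≤
      C * ((l2 - l3) ^ (m + n - 1) / (1 + (l2 - l3) * B) ^ m) := by
  obtain ⟨C, hC, H⟩ := J_bound m n hm hn
  refine ⟨C, hC, ?_⟩
  intro l2 l3 B h23 hB
  obtain ⟨h1, h2, h3⟩ := H (l2 - l3) B (by linarith) hB
  have e : (fun s : ℝ => Real.exp (-(B * (s - l3))) * (s - l3) ^ (m - 1) * (l2 - s) ^ (n - 1)) =
      fun s => (fun u : ℝ => Real.exp (-(B * u)) * u ^ (m - 1) * (l2 - l3 - u) ^ (n - 1)) (s - l3) := by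
    funext s
    have : l2 - l3 - (s - l3) = l2 - s := by ring
    simp only [this]
  rw [e, intervalIntegral.integral_comp_sub_right (fun u : ℝ => Real.exp (-(B * u)) * u ^ (m - 1) * (l2 - l3 - u) ^ (n - 1)) l3, sub_self]
  refine ⟨?_, h2, h3⟩
  have := h1.comp_sub_right l3
  simpa using this

lemma x_rpow (x k : ℝ) (hx : 0 < x) : x * x ^ (k - 1) = x ^ k := by
  rw [Real.rpow_sub_one hx.ne']; field_simp

lemma T1_fac (k u p w q a b : ℝ) (hu : 0 < u) (hp : 0 < p) (hw : 0 < w)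
    (hq : 0 < q) (ha : 0 < a) (hb : 0 < b) :
    p * (a + q) * ((p + b) * w) * (u * (a + q) * p * q * (p + b) * w) ^ (k - 1) =
      u ^ (k - 1) * p ^ k * (a + q) ^ k * (p + b) ^ k * w ^ k * q ^ (k - 1) := by
  rw [Real.mul_rpow (by positivity) (by positivity), Real.mul_rpow (by positivity) (by positivity),
    Real.mul_rpow (by positivity) (by positivity), Real.mul_rpow (by positivity) (by positivity),
    Real.mul_rpow (by positivity) (by positivity), ← x_rpow p k hp, ← x_rpow w k hw,
    ← x_rpow (a + q) k (by positivity), ← x_rpow (p + b) k (by positivity)]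
  ring

lemma T2_fac (k u p w q a b : ℝ) (hu : 0 < u) (hp : 0 < p) (hw : 0 < w)
    (hq : 0 < q) (ha : 0 < a) (hb : 0 < b) :
    u * q * ((p + b) * w) * (u * (a + q) * p * q * (p + b) * w) ^ (k - 1) =
      u ^ k * p ^ (k - 1) * (a + q) ^ (k - 1) * (p + b) ^ k * w ^ k * q ^ k := by
  rw [Real.mul_rpow (by positivity) (by positivity), Real.mul_rpow (by positivity) (by positivity),
    Real.mul_rpow (by positivity) (by positivity), Real.mul_rpow (by positivity) (by positivity),
    Real.mul_rpow (by positivity) (by positivity), ← x_rpow u k hu, ← x_rpow w k hw,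
    ← x_rpow q k (by positivity), ← x_rpow (p + b) k (by positivity)]
  ring

lemma G_bound (r a b p q G : ℝ) (hr : 0 < r) (ha : 0 < a) (hb : 0 < b) (hba : b ≤ a) (hp : 0 < p) (hq : 0 < q)
    (hpa : p ≤ a) (hqb : q ≤ b) (hG : 0 ≤ G) :
    1 / (1 + G * (p + q)) ^ r ≤ 2 ^ r * a ^ r / ((p + q) ^ r * (1 + (a + b) * G) ^ r) := by
  rw [← Real.mul_rpow (by norm_num) ha.le, ← Real.mul_rpow (by positivity) (by positivity),
    ← Real.div_rpow (by positivity) (by positivity), ← Real.one_rpow r,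
    ← Real.div_rpow (by norm_num) (by positivity)]
  apply Real.rpow_le_rpow (by positivity) _ hr.le
  simp only [Real.one_rpow]
  rw [div_le_div_iff₀ (by positivity) (by positivity)]
  have : 0 ≤ G * (p + q) := by positivity
  nlinarith

lemma T1_up (k : ℝ) (hk : 0 < k) : ∃ C : ℝ, 0 < C ∧ ∀ u p w q a b G : ℝ, 0 < u → 0 < p → 0 < w →
    0 < q → a = u + p → b = w + q → b ≤ a → 0 ≤ G →
    p * (a + q) * ((p + b) * w) * (u * (a + q) * p * q * (p + b) * w) ^ (k - 1) / (1 + G * (p + q)) ^ (k + 1) ≤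
     C * (a ^ (2 * k + 1) / (1 + (a + b) * G) ^ (k + 1)) *
      (b ^ k * (u ^ (k - 1) * p ^ (k / 2 - 1)) * (w ^ k * q ^ (k / 2 - 1))
        + (u ^ (k - 1) * p ^ (k - 1)) * (w ^ k * q ^ (k - 1))) := by
  refine ⟨2 ^ k * 2 ^ k * 2 ^ (k + 1), by positivity, ?_⟩
  intro u p w q a b G hu hp hw hq hab hbb hba hG
  have ha : 0 < a := by linarith
  have hb : 0 < b := by linarith
  rw [T1_fac k u p w q a b hu hp hw hq ha hb]
  have g := G_bound (k + 1) a b p q G (by linarith) ha hb hba hp hq (by linarith) (by linarith) hG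
  have s1 : (a + q) ^ k ≤ 2 ^ k * a ^ k := by
    rw [← Real.mul_rpow (by norm_num) ha.le]
    exact Real.rpow_le_rpow (by positivity) (by linarith) hk.le
  have s2 : (p + b) ^ k ≤ 2 ^ k * (b ^ k + p ^ k) := by
    have pb : 0 < b ^ k := by positivity
    have pp : 0 < p ^ k := by positivity
    rcases le_total p b with h | h
    · calc (p + b) ^ k ≤ (2 * b) ^ k := Real.rpow_le_rpow (by positivity) (by linarith) hk.le
        _ = 2 ^ k * b ^ k := Real.mul_rpow (by norm_num) hb.le
        _ ≤ _ := by gcongr; linarith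
    · calc (p + b) ^ k ≤ (2 * p) ^ k := Real.rpow_le_rpow (by positivity) (by linarith) hk.le
        _ = 2 ^ k * p ^ k := Real.mul_rpow (by norm_num) hp.le
        _ ≤ _ := by gcongr; linarith
  have pq : 0 < (p + q) ^ (k + 1) := by positivity
  have t1 : p ^ k * q ^ (k - 1) / (p + q) ^ (k + 1) ≤ p ^ (k / 2 - 1) * q ^ (k / 2 - 1) := by
    rw [div_le_iff₀ pq]
    have e1 : p ^ k = p ^ (k / 2 - 1) * p ^ (k / 2 + 1) := by rw [← Real.rpow_add hp]; congr 1; ring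
    have e2 : q ^ (k - 1) = q ^ (k / 2 - 1) * q ^ (k / 2) := by rw [← Real.rpow_add hq]; congr 1; ring
    have e3 : (p + q) ^ (k + 1) = (p + q) ^ (k / 2 + 1) * (p + q) ^ (k / 2) := by
      rw [← Real.rpow_add (by positivity)]; congr 1; ring
    rw [e1, e2, e3]
    have : p ^ (k / 2 + 1) ≤ (p + q) ^ (k / 2 + 1) := Real.rpow_le_rpow hp.le (by linarith) (by linarith)
    have h' : q ^ (k / 2) ≤ (p + q) ^ (k / 2) := Real.rpow_le_rpow hq.le (by linarith) (by linarith)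
    calc _ = (p ^ (k / 2 - 1) * q ^ (k / 2 - 1)) * (p ^ (k / 2 + 1) * q ^ (k / 2)) := by ring
      _ ≤ _ := by gcongr
  have t2 : p ^ k * p ^ k * q ^ (k - 1) / (p + q) ^ (k + 1) ≤ p ^ (k - 1) * q ^ (k - 1) := by
    rw [div_le_iff₀ pq]
    have e1 : p ^ k * p ^ k = p ^ (k - 1) * p ^ (k + 1) := by
      rw [← Real.rpow_add hp, ← Real.rpow_add hp]; congr 1; ring
    rw [e1]
    have : p ^ (k + 1) ≤ (p + q) ^ (k + 1) := Real.rpow_le_rpow hp.le (by linarith) (by linarith)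
    calc _ = (p ^ (k - 1) * q ^ (k - 1)) * (p ^ (k + 1)) := by ring
      _ ≤ _ := by gcongr
  have ea : a ^ (2 * k + 1) = a ^ k * a ^ (k + 1) := by rw [← Real.rpow_add ha]; congr 1; ring
  rw [ea]
  calc _ = u ^ (k - 1) * p ^ k * (a + q) ^ k * (p + b) ^ k * w ^ k * q ^ (k - 1) * (1 / (1 + G * (p + q)) ^ (k + 1)) := by ring
    _ ≤ u ^ (k - 1) * p ^ k * (2 ^ k * a ^ k) * (2 ^ k * (b ^ k + p ^ k)) * w ^ k * q ^ (k - 1) *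
        (2 ^ (k + 1) * a ^ (k + 1) / ((p + q) ^ (k + 1) * (1 + (a + b) * G) ^ (k + 1))) := by gcongr
    _ = 2 ^ k * 2 ^ k * 2 ^ (k + 1) * (a ^ k * a ^ (k + 1) / (1 + (a + b) * G) ^ (k + 1)) *
        (u ^ (k - 1) * w ^ k * (b ^ k * (p ^ k * q ^ (k - 1) / (p + q) ^ (k + 1)) +
          p ^ k * p ^ k * q ^ (k - 1) / (p + q) ^ (k + 1))) := by
        field_simp
    _ ≤ 2 ^ k * 2 ^ k * 2 ^ (k + 1) * (a ^ k * a ^ (k + 1) / (1 + (a + b) * G) ^ (k + 1)) *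
        (u ^ (k - 1) * w ^ k * (b ^ k * (p ^ (k / 2 - 1) * q ^ (k / 2 - 1)) +
          p ^ (k - 1) * q ^ (k - 1))) := by gcongr
    _ = _ := by ring

lemma T1_lo (k : ℝ) (hk : 0 < k) (u p w q a b G : ℝ) (hu : 0 < u) (hp : 0 < p) (hw : 0 < w)
    (hq : 0 < q) (hab : a = u + p) (hbb : b = w + q) (hG : 0 ≤ G) :
    (a ^ k / (1 + (a + b) * G) ^ (k + 1)) * ((u ^ (k - 1) * p ^ (2 * k)) * (w ^ k * q ^ (k - 1))) ≤
    p * (a + q) * ((p + b) * w) * (u * (a + q) * p * q * (p + b) * w) ^ (k - 1) / (1 + G * (p + q)) ^ (k + 1) := by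
  have ha : 0 < a := by linarith
  have hb : 0 < b := by linarith
  rw [T1_fac k u p w q a b hu hp hw hq ha hb]
  have e : p ^ (2 * k) = p ^ k * p ^ k := by rw [← Real.rpow_add hp]; congr 1; ring
  have s0 : (1 + G * (p + q)) ^ (k + 1) ≤ (1 + (a + b) * G) ^ (k + 1) := by
    apply Real.rpow_le_rpow (by positivity) _ (by linarith)
    nlinarith
  have s1 : a ^ k ≤ (a + q) ^ k := Real.rpow_le_rpow ha.le (by linarith) hk.le
  have s2 : p ^ k ≤ (p + b) ^ k := Real.rpow_le_rpow hp.le (by linarith) hk.le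
  rw [e]
  calc _ = u ^ (k - 1) * p ^ k * a ^ k * p ^ k * w ^ k * q ^ (k - 1) / (1 + (a + b) * G) ^ (k + 1) := by ring
    _ ≤ _ := by gcongr

lemma T2_up (k : ℝ) (hk : 0 < k) : ∃ C : ℝ, 0 < C ∧ ∀ u p w q a b G : ℝ, 0 < u → 0 < p → 0 < w →
    0 < q → a = u + p → b = w + q → b ≤ a → 0 ≤ G →
    u * q * ((p + b) * w) * (u * (a + q) * p * q * (p + b) * w) ^ (k - 1) / (1 + G * (p + q)) ^ k ≤
     C * (a ^ (2 * k - 1) / (1 + (a + b) * G) ^ k) * b ^ k * ((u ^ k * p ^ (k - 1)) * w ^ k) := by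
  obtain ⟨M, hM, H⟩ := rpow_cmp (k - 1)
  refine ⟨M * 2 ^ k, by positivity, ?_⟩
  intro u p w q a b G hu hp hw hq hab hbb hba hG
  have ha : 0 < a := by linarith
  have hb : 0 < b := by linarith
  rw [T2_fac k u p w q a b hu hp hw hq ha hb]
  have g := G_bound k a b p q G (by linarith) ha hb hba hp hq (by linarith) (by linarith) hG
  have s1 := (H a (a + q) ha (by linarith) (by linarith)).2
  have s2 : (p + b) ^ k * q ^ k / (p + q) ^ k ≤ b ^ k := by
    rw [← Real.mul_rpow (by positivity) hq.le, ← Real.div_rpow (by positivity) (by positivity)]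
    apply Real.rpow_le_rpow (by positivity) _ hk.le
    rw [div_le_iff₀ (by positivity)]
    nlinarith
  have ea : a ^ (2 * k - 1) = a ^ (k - 1) * a ^ k := by rw [← Real.rpow_add ha]; congr 1; ring
  rw [ea]
  calc _ = u ^ k * p ^ (k - 1) * (a + q) ^ (k - 1) * (p + b) ^ k * w ^ k * q ^ k * (1 / (1 + G * (p + q)) ^ k) := by ring
    _ ≤ u ^ k * p ^ (k - 1) * (M * a ^ (k - 1)) * (p + b) ^ k * w ^ k * q ^ k *
        (2 ^ k * a ^ k / ((p + q) ^ k * (1 + (a + b) * G) ^ k)) := by gcongr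
    _ = M * 2 ^ k * (a ^ (k - 1) * a ^ k / (1 + (a + b) * G) ^ k) * ((p + b) ^ k * q ^ k / (p + q) ^ k) *
        ((u ^ k * p ^ (k - 1)) * w ^ k) := by field_simp
    _ ≤ _ := by gcongr


noncomputable def FF (k x1 x2 x3 l1 l2 l3 n2 n1 : ℝ) : ℝ :=
  ((n1 - l2) * (l1 - n2) * Erk1 k ((x1 - x2) / 2) (n1 - n2)
        + (l1 - n1) * (l2 - n2) * Erk1 k (-(x1 - x2) / 2) (n1 - n2))
      * ((n1 - l3) * (n2 - l3)) * Real.exp ((x1 + x2 - 2 * x3) * (n1 + n2) / 2)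
      * Wk k l1 l2 l3 n1 n2

noncomputable def f1 (A l1 l2 m n s : ℝ) : ℝ :=
  Real.exp (-(A * (l1 - s))) * (l1 - s) ^ (m - 1) * (s - l2) ^ (n - 1)

noncomputable def f2 (B l2 l3 m n s : ℝ) : ℝ :=
  Real.exp (-(B * (s - l3))) * (s - l3) ^ (m - 1) * (l2 - s) ^ (n - 1)

lemma FF_meas (k x1 x2 x3 l1 l2 l3 : ℝ) : Measurable (Function.uncurry (FF k x1 x2 x3 l1 l2 l3)) := by
  unfold Function.uncurry FF Wk
  have h1 := (Erk1_meas k ((x1 - x2) / 2)).comp (measurable_snd.sub measurable_fst : Measurable (fun p : ℝ × ℝ => p.2 - p.1))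
  have h2 := (Erk1_meas k (-(x1 - x2) / 2)).comp (measurable_snd.sub measurable_fst : Measurable (fun p : ℝ × ℝ => p.2 - p.1))
  simp only [Function.comp_def] at h1 h2
  fun_prop

lemma FF_pt (k : ℝ) (hk : 0 < k) : ∃ K0 K1 K3 : ℝ, 0 < K0 ∧ 0 < K1 ∧ 0 < K3 ∧ ∀ l1 l2 l3 x1 x2 x3 : ℝ,
      l1 + l2 + l3 = 0 → l2 < l1 → l3 < l2 → x1 + x2 + x3 = 0 → x3 ≤ x2 → x1 ≤ x3 →
      l2 - l3 ≤ l1 - l2 → ∀ n2 ∈ Set.Ioo l3 l2, ∀ n1 ∈ Set.Ioo l2 l1,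
      0 ≤ FF k x1 x2 x3 l1 l2 l3 n2 n1 ∧
      (K0 * Real.exp (l1 * x2 + l2 * x3 + l3 * x1) * ((l1 - l2) ^ k / (1 + (l1 - l3) * (x2 - x1)) ^ (k + 1))) *
        f2 (x3 - x1) l2 l3 (k + 1) k n2 * f1 (x2 - x3) l1 l2 k (2 * k + 1) n1 ≤ FF k x1 x2 x3 l1 l2 l3 n2 n1 ∧
      FF k x1 x2 x3 l1 l2 l3 n2 n1 ≤
      (K1 * Real.exp (l1 * x2 + l2 * x3 + l3 * x1) * ((l1 - l2) ^ (2 * k + 1) / (1 + (l1 - l3) * (x2 - x1)) ^ (k + 1)) * (l2 - l3) ^ k) *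
        f2 (x3 - x1) l2 l3 (k + 1) (k / 2) n2 * f1 (x2 - x3) l1 l2 k (k / 2) n1 +
      (K1 * Real.exp (l1 * x2 + l2 * x3 + l3 * x1) * ((l1 - l2) ^ (2 * k + 1) / (1 + (l1 - l3) * (x2 - x1)) ^ (k + 1))) *
        f2 (x3 - x1) l2 l3 (k + 1) k n2 * f1 (x2 - x3) l1 l2 k k n1 +
      (K3 * Real.exp (l1 * x2 + l2 * x3 + l3 * x1) * ((l1 - l2) ^ (2 * k - 1) / (1 + (l1 - l3) * (x2 - x1)) ^ k) * (l2 - l3) ^ k) *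
        f2 (x3 - x1) l2 l3 (k + 1) 1 n2 * f1 (x2 - x3) l1 l2 (k + 1) k n1 := by
  obtain ⟨C1, hC1, H1⟩ := Erk1_neg k hk
  obtain ⟨C2, hC2, H2⟩ := Erk1_pos k hk
  obtain ⟨D1, hD1, U1⟩ := T1_up k hk
  obtain ⟨D2, hD2, U2⟩ := T2_up k hk
  refine ⟨C1⁻¹, C1 * D1, C2 * D2, by positivity, by positivity, by positivity, ?_⟩
  intro l1 l2 l3 x1 x2 x3 hl h12 h23 hx hx23 hx31 hba n2 hn2 n1 hn1
  have hu : 0 < l1 - n1 := by linarith [hn1.2]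
  have hp : 0 < n1 - l2 := by linarith [hn1.1]
  have hw : 0 < n2 - l3 := by linarith [hn2.1]
  have hq : 0 < l2 - n2 := by linarith [hn2.2]
  have hG : 0 ≤ x2 - x1 := by linarith
  have e1 : l1 - l2 + (l2 - n2) = l1 - n2 := by ring
  have e2 : n1 - l2 + (l2 - l3) = n1 - l3 := by ring
  have e3 : n1 - l2 + (l2 - n2) = n1 - n2 := by ring
  have e4 : l1 - l2 + (l2 - l3) = l1 - l3 := by ring
  have u1 := U1 (l1 - n1) (n1 - l2) (n2 - l3) (l2 - n2) (l1 - l2) (l2 - l3) (x2 - x1) hu hp hw hq (by ring) (by ring) hba hG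
  have u2 := U2 (l1 - n1) (n1 - l2) (n2 - l3) (l2 - n2) (l1 - l2) (l2 - l3) (x2 - x1) hu hp hw hq (by ring) (by ring) hba hG
  have o1 := T1_lo k hk (l1 - n1) (n1 - l2) (n2 - l3) (l2 - n2) (l1 - l2) (l2 - l3) (x2 - x1) hu hp hw hq (by ring) (by ring) hG
  rw [e1, e2, e3, e4] at u1 u2 o1
  have hv : 0 < n1 - n2 := by linarith
  set y := (x2 - x1) * (n1 - n2) / 2 with hy
  have hy0 : 0 ≤ y := by positivity
  have y2 : 2 * y = (x2 - x1) * (n1 - n2) := by rw [hy]; ring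
  have E1 := H1 ((x1 - x2) / 2) (n1 - n2) y (by rw [hy]; ring) hy0
  have E2 := H2 (-(x1 - x2) / 2) (n1 - n2) y (by rw [hy]; ring) hy0
  rw [y2] at E1 E2
  have hX : Real.exp ((x1 + x2 - 2 * x3) * (n1 + n2) / 2) * Real.exp y =
      Real.exp (l1 * x2 + l2 * x3 + l3 * x1) * Real.exp (-((x2 - x3) * (l1 - n1))) * Real.exp (-((x3 - x1) * (n2 - l3))) := by
    rw [← Real.exp_add, ← Real.exp_add, ← Real.exp_add]
    congr 1
    have : l2 = - l1 - l3 := by linarith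
    rw [hy, this]; ring
  have k1 : k + 1 - 1 = k := by ring
  have k2 : 2 * k + 1 - 1 = 2 * k := by ring
  have k3 : (1:ℝ) - 1 = 0 := by ring
  have r1 : 0 < l1 - n2 := by linarith
  have r2 : 0 < n1 - l3 := by linarith
  set W := ((l1 - n1) * (l1 - n2) * (n1 - l2) * (l2 - n2) * (n1 - l3) * (n2 - l3)) ^ (k - 1) with hW
  have hWp : 0 < W := by positivity
  have E1p : 0 ≤ Erk1 k ((x1 - x2) / 2) (n1 - n2) := le_trans (by positivity) E1.1
  have E2p := E2.1
  unfold FF Wk f1 f2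
  rw [← hW, k1, k2, k3]
  simp only [Real.rpow_zero]
  set X := Real.exp ((x1 + x2 - 2 * x3) * (n1 + n2) / 2) with hXd
  set M := Real.exp (l1 * x2 + l2 * x3 + l3 * x1) with hM
  set eA := Real.exp (-((x2 - x3) * (l1 - n1))) with heA
  set eB := Real.exp (-((x3 - x1) * (n2 - l3))) with heB
  have Xp : 0 < X := Real.exp_pos _
  refine ⟨by positivity, ?_, ?_⟩
  · calc _ = C1⁻¹ * (M * eA * eB) * ((l1 - l2) ^ k / (1 + (l1 - l3) * (x2 - x1)) ^ (k + 1) *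
      ((l1 - n1) ^ (k - 1) * (n1 - l2) ^ (2 * k) * ((n2 - l3) ^ k * (l2 - n2) ^ (k - 1)))) := by ring
      _ ≤ C1⁻¹ * (M * eA * eB) * ((n1 - l2) * (l1 - n2) * ((n1 - l3) * (n2 - l3)) * W / (1 + (x2 - x1) * (n1 - n2)) ^ (k + 1)) := by gcongr
      _ = ((n1 - l2) * (l1 - n2) * (C1⁻¹ * (Real.exp y / (1 + (x2 - x1) * (n1 - n2)) ^ (k + 1))) + 0) * ((n1 - l3) * (n2 - l3)) * X * W := by
        rw [← hX]; ring
      _ ≤ _ := by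
        gcongr
        · exact E1.1
        · positivity
  · calc _ ≤ ((n1 - l2) * (l1 - n2) * (C1 * (Real.exp y / (1 + (x2 - x1) * (n1 - n2)) ^ (k + 1))) +
        (l1 - n1) * (l2 - n2) * (C2 * (Real.exp y / (1 + (x2 - x1) * (n1 - n2)) ^ k))) * ((n1 - l3) * (n2 - l3)) * X * W := by
          gcongr
          · exact E1.2
          · exact E2.2
      _ = C1 * (X * Real.exp y) * ((n1 - l2) * (l1 - n2) * ((n1 - l3) * (n2 - l3)) * W / (1 + (x2 - x1) * (n1 - n2)) ^ (k + 1)) +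
          C2 * (X * Real.exp y) * ((l1 - n1) * (l2 - n2) * ((n1 - l3) * (n2 - l3)) * W / (1 + (x2 - x1) * (n1 - n2)) ^ k) := by ring
      _ ≤ C1 * (X * Real.exp y) * _ + C2 * (X * Real.exp y) * _ := by
        refine add_le_add (mul_le_mul_of_nonneg_left u1 (by positivity)) (mul_le_mul_of_nonneg_left u2 (by positivity))
      _ = _ := by rw [hX]; ring

lemma up_alg1 (k a b P Q R : ℝ) (hk : 0 < k) (ha : 0 < a) (hb : 0 < b) (hba : b ≤ a)
    (hP : 0 < P) (hQ : 0 < Q) (hR : 0 < R) :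
    a ^ (2 * k + 1) / R * b ^ k * (b ^ (k + 1 + k / 2 - 1) / Q) * (a ^ (k + k / 2 - 1) / P) ≤
      a ^ (4 * k) * b ^ (2 * k) / (P * Q * R) := by
  have h : b ^ (k / 2) ≤ a ^ (k / 2) := Real.rpow_le_rpow hb.le hba (by positivity)
  have e1 : b ^ k * b ^ (k + 1 + k / 2 - 1) = b ^ (2 * k) * b ^ (k / 2) := by
    rw [← Real.rpow_add hb, ← Real.rpow_add hb]; congr 1; ring
  have e2 : a ^ (4 * k) = a ^ (2 * k + 1) * a ^ (k + k / 2 - 1) * a ^ (k / 2) := by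
    rw [← Real.rpow_add ha, ← Real.rpow_add ha]; congr 1; ring
  rw [e2]
  calc _ = (b ^ k * b ^ (k + 1 + k / 2 - 1)) * (a ^ (2 * k + 1) * a ^ (k + k / 2 - 1)) / (P * Q * R) := by
        field_simp
    _ = (b ^ (2 * k) * b ^ (k / 2)) * (a ^ (2 * k + 1) * a ^ (k + k / 2 - 1)) / (P * Q * R) := by rw [e1]
    _ ≤ (b ^ (2 * k) * a ^ (k / 2)) * (a ^ (2 * k + 1) * a ^ (k + k / 2 - 1)) / (P * Q * R) := by gcongr
    _ = _ := by ring

lemma up_alg2 (k a b P Q R : ℝ) (ha : 0 < a) (hb : 0 < b)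
    (hP : 0 < P) (hQ : 0 < Q) (hR : 0 < R) :
    a ^ (2 * k + 1) / R * (b ^ (k + 1 + k - 1) / Q) * (a ^ (k + k - 1) / P) =
      a ^ (4 * k) * b ^ (2 * k) / (P * Q * R) := by
  have e1 : b ^ (k + 1 + k - 1) = b ^ (2 * k) := by congr 1; ring
  have e2 : a ^ (4 * k) = a ^ (2 * k + 1) * a ^ (k + k - 1) := by
    rw [← Real.rpow_add ha]; congr 1; ring
  rw [e2, e1]; field_simp

lemma up_alg3 (k a b A B Q : ℝ) (ha : 0 < a) (hb : 0 < b) (hba : b ≤ a) (hA : 0 ≤ A) (hB : 0 ≤ B)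
    (h : b * B ≤ a * A) (hQ : 0 < Q) :
    a ^ (2 * k - 1) / (1 + (a + b) * (A + B)) ^ k * b ^ k * (b ^ (k + 1 + 1 - 1) / Q) *
        (a ^ (k + 1 + k - 1) / (1 + a * A) ^ (k + 1)) ≤
      4 * (a ^ (4 * k) * b ^ (2 * k) / ((1 + a * A) ^ k * Q * (1 + (a + b) * (A + B)) ^ (k + 1))) := by
  have hP : 0 < 1 + a * A := by positivity
  have hR : 0 < 1 + (a + b) * (A + B) := by positivity
  have e1 : b ^ k * b ^ (k + 1 + 1 - 1) = b ^ (2 * k) * b := by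
    rw [← Real.rpow_add hb]
    nth_rewrite 3 [← Real.rpow_one b]
    rw [← Real.rpow_add hb]; congr 1; ring
  have e2 : a ^ (2 * k - 1) * a ^ (k + 1 + k - 1) = a ^ (4 * k) / a := by
    rw [← Real.rpow_add ha, ← Real.rpow_sub_one ha.ne']; congr 1; ring
  rw [Real.rpow_add_one hP.ne', Real.rpow_add_one hR.ne']
  have key : b * (1 + (a + b) * (A + B)) ≤ 4 * (a * (1 + a * A)) := by
    have h1 : (a + b) * (A + B) ≤ 2 * a * (A + B) := by nlinarith [add_nonneg hA hB]
    have h2 : b * ((a + b) * (A + B)) ≤ b * (2 * a * (A + B)) := by gcongr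
    have h3 : b * (a * A) ≤ a * (a * A) := by gcongr
    have h4 : a * (b * B) ≤ a * (a * A) := by gcongr
    nlinarith
  set P := 1 + a * A
  set R := 1 + (a + b) * (A + B)
  calc _ = (a ^ (2 * k - 1) * a ^ (k + 1 + k - 1)) * (b ^ k * b ^ (k + 1 + 1 - 1)) / (P ^ k * Q * R ^ k * P) := by
        field_simp
    _ = a ^ (4 * k) * b ^ (2 * k) / (P ^ k * Q * R ^ k) * (b / (a * P)) := by
        rw [e1, e2]; field_simp
    _ ≤ a ^ (4 * k) * b ^ (2 * k) / (P ^ k * Q * R ^ k) * (4 / R) := by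
        refine mul_le_mul_of_nonneg_left ?_ (by positivity)
        rw [div_le_div_iff₀ (by positivity) hR]; exact key
    _ = _ := by field_simp

lemma V_bound (k l1 l2 l3 : ℝ) (hk : 0 < k) (ha : 0 < l1 - l2) (hb : 0 < l2 - l3) (hba : l2 - l3 ≤ l1 - l2) :
    (l1 - l2) ^ (4 * k) * (l2 - l3) ^ (2 * k) ≤ Vlam l1 l2 l3 ^ (2 * k) ∧
    Vlam l1 l2 l3 ^ (2 * k) ≤ 2 ^ (2 * k) * ((l1 - l2) ^ (4 * k) * (l2 - l3) ^ (2 * k)) := by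
  have V1 : (l1 - l2) ^ (4 * k) * (l2 - l3) ^ (2 * k) ≤ Vlam l1 l2 l3 ^ (2 * k) := by
    have : (l1 - l2) ^ (4 * k) = ((l1 - l2) ^ (2:ℝ)) ^ (2 * k) := by
      rw [← Real.rpow_mul ha.le]; congr 1; ring
    rw [this, ← Real.mul_rpow (by positivity) hb.le]
    apply Real.rpow_le_rpow (by positivity) _ (by linarith)
    unfold Vlam
    rw [Real.rpow_two]
    gcongr
    nlinarith
  have V2 : Vlam l1 l2 l3 ^ (2 * k) ≤ 2 ^ (2 * k) * ((l1 - l2) ^ (4 * k) * (l2 - l3) ^ (2 * k)) := by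
    have : (l1 - l2) ^ (4 * k) = ((l1 - l2) ^ (2:ℝ)) ^ (2 * k) := by
      rw [← Real.rpow_mul ha.le]; congr 1; ring
    rw [this, ← Real.mul_rpow (by positivity) hb.le, ← Real.mul_rpow (by norm_num) (by positivity)]
    have v0 : 0 ≤ Vlam l1 l2 l3 := by
      unfold Vlam
      have : 0 < l1 - l3 := by linarith
      positivity
    apply Real.rpow_le_rpow v0 _ (by linarith)
    unfold Vlam
    rw [Real.rpow_two, ← mul_assoc]
    refine mul_le_mul_of_nonneg_right ?_ hb.le
    nlinarith
  exact ⟨V1, V2⟩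

set_option maxHeartbeats 2000000 in
/-- Theorem 4.1: sharp estimate of the `A₂` Dunkl kernel. -/
theorem estimate_C231_case2 (k : ℝ) (hk : 0 < k) :
    ∃ C : ℝ, 0 < C ∧ ∀ l1 l2 l3 x1 x2 x3 : ℝ,
      l1 + l2 + l3 = 0 →
      l2 < l1 →
      l3 < l2 →
      x1 + x2 + x3 = 0 →
      x3 ≤ x2 →
      x1 ≤ x3 →
      l2 - l3 ≤ l1 - l2 →
      (l2 - l3) * (x3 - x1) ≤ (l1 - l2) * (x2 - x3) →
      (C⁻¹ * (Real.exp (l1 * x2 + l2 * x3 + l3 * x1) /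
          ((1 + (l1 - l2) * (x2 - x3)) ^ k * (1 + (l2 - l3) * (x3 - x1)) ^ (k + 1)
            * (1 + (l1 - l3) * (x2 - x1)) ^ (k + 1)))
        ≤ EkA2 k x1 x2 x3 l1 l2 l3 ∧
      EkA2 k x1 x2 x3 l1 l2 l3
        ≤ C * (Real.exp (l1 * x2 + l2 * x3 + l3 * x1) /
          ((1 + (l1 - l2) * (x2 - x3)) ^ k * (1 + (l2 - l3) * (x3 - x1)) ^ (k + 1)
            * (1 + (l1 - l3) * (x2 - x1)) ^ (k + 1)))) := by
  obtain ⟨K0, K1, K3, hK0, hK1, hK3, HF⟩ := FF_pt k hk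
  obtain ⟨a0, ha0, A0⟩ := J1_bound k (2 * k + 1) hk (by linarith)
  obtain ⟨b0, hb0, B0⟩ := J2_bound (k + 1) k (by linarith) hk
  obtain ⟨a1, ha1, A1⟩ := J1_bound k (k / 2) hk (by linarith)
  obtain ⟨b1, hb1, B1⟩ := J2_bound (k + 1) (k / 2) (by linarith) (by linarith)
  obtain ⟨a2, ha2, A2⟩ := J1_bound k k hk hk
  obtain ⟨a3, ha3, A3⟩ := J1_bound (k + 1) k (by linarith) hk
  obtain ⟨b3, hb3, B3⟩ := J2_bound (k + 1) 1 (by linarith) (by norm_num)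
  have g1 := Real.Gamma_pos_of_pos hk
  have g2 := Real.Gamma_pos_of_pos (by linarith : 0 < 3 * k)
  set c := 3 * Real.Gamma (3 * k) / Real.Gamma k ^ 2 with hc
  have cp : 0 < c := by positivity
  set CL := c * (2 ^ (2 * k))⁻¹ * K0 * b0⁻¹ * a0⁻¹ with hCL
  set CU := c * (K1 * b1 * a1 + K1 * b0 * a2 + K3 * b3 * a3 * 4) with hCU
  have CLp : 0 < CL := by positivity
  have CUp : 0 < CU := by positivity
  refine ⟨CU + CL⁻¹, by positivity, ?_⟩
  intro l1 l2 l3 x1 x2 x3 hl h12 h23 hx hx23 hx31 hba hAB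
  have hA : 0 ≤ x2 - x3 := by linarith
  have hB : 0 ≤ x3 - x1 := by linarith
  have hab : l1 - l3 = (l1 - l2) + (l2 - l3) := by ring
  have hABG : x2 - x1 = (x2 - x3) + (x3 - x1) := by ring
  have HF' := HF l1 l2 l3 x1 x2 x3 hl h12 h23 hx hx23 hx31 hba
  obtain ⟨A0i, A0l, -⟩ := A0 l1 l2 (x2 - x3) h12 hA
  obtain ⟨A1i, -, A1u⟩ := A1 l1 l2 (x2 - x3) h12 hA
  obtain ⟨A2i, -, A2u⟩ := A2 l1 l2 (x2 - x3) h12 hA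
  obtain ⟨A3i, -, A3u⟩ := A3 l1 l2 (x2 - x3) h12 hA
  obtain ⟨B0i, B0l, B0u⟩ := B0 l2 l3 (x3 - x1) h23 hB
  obtain ⟨B1i, -, B1u⟩ := B1 l2 l3 (x3 - x1) h23 hB
  obtain ⟨B3i, -, B3u⟩ := B3 l2 l3 (x3 - x1) h23 hB
  have TD := two_dim (FF k x1 x2 x3 l1 l2 l3) (FF_meas _ _ _ _ _ _ _) l1 l2 l3 h12.le h23.le _ _ _ _
    _ _ _ _ _ _ _ _ B0i A0i B1i A1i B0i A2i B3i A3i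
    (fun n2 h2 n1 h1 => (HF' n2 h2 n1 h1).1) (fun n2 h2 n1 h1 => (HF' n2 h2 n1 h1).2.1)
    (fun n2 h2 n1 h1 => (HF' n2 h2 n1 h1).2.2)
  have hE : EkA2 k x1 x2 x3 l1 l2 l3 = c / Vlam l1 l2 l3 ^ (2 * k) *
      ∫ n2 in l3..l2, ∫ n1 in l2..l1, FF k x1 x2 x3 l1 l2 l3 n2 n1 := by
    unfold EkA2 FF
    rw [hc]; congr 1
    rw [div_div, mul_comm (Real.Gamma k ^ 2)]
  rw [hE]
  have ha : 0 < l1 - l2 := by linarith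
  have hb : 0 < l2 - l3 := by linarith
  obtain ⟨V1, V2⟩ := V_bound k l1 l2 l3 hk ha hb hba
  have al1 := up_alg1 k (l1 - l2) (l2 - l3) ((1 + (l1 - l2) * (x2 - x3)) ^ k)
    ((1 + (l2 - l3) * (x3 - x1)) ^ (k + 1)) ((1 + (l1 - l3) * (x2 - x1)) ^ (k + 1)) hk ha hb hba
    (by positivity) (by positivity) (by rw [hab, hABG]; positivity)
  have al2 := up_alg2 k (l1 - l2) (l2 - l3) ((1 + (l1 - l2) * (x2 - x3)) ^ k)
    ((1 + (l2 - l3) * (x3 - x1)) ^ (k + 1)) ((1 + (l1 - l3) * (x2 - x1)) ^ (k + 1)) ha hb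
    (by positivity) (by positivity) (by rw [hab, hABG]; positivity)
  have al3 := up_alg3 k (l1 - l2) (l2 - l3) (x2 - x3) (x3 - x1)
    ((1 + (l2 - l3) * (x3 - x1)) ^ (k + 1)) ha hb hba hA hB hAB (by positivity)
  rw [← hab, ← hABG] at al3
  have hRp : 0 < 1 + (l1 - l3) * (x2 - x1) := by rw [hab, hABG]; positivity
  have hPp : 0 < 1 + (l1 - l2) * (x2 - x3) := by positivity
  have hQp : 0 < 1 + (l2 - l3) * (x3 - x1) := by positivity
  have Vp : 0 < Vlam l1 l2 l3 ^ (2 * k) := lt_of_lt_of_le (by positivity) V1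
  set I := ∫ n2 in l3..l2, ∫ n1 in l2..l1, FF k x1 x2 x3 l1 l2 l3 n2 n1 with hI
  set M := Real.exp (l1 * x2 + l2 * x3 + l3 * x1) with hM
  set P := 1 + (l1 - l2) * (x2 - x3) with hP
  set Q := 1 + (l2 - l3) * (x3 - x1) with hQ
  set R := 1 + (l1 - l3) * (x2 - x1) with hR
  have Mp : 0 < M := Real.exp_pos _
  have Tp : 0 < M / (P ^ k * Q ^ (k + 1) * R ^ (k + 1)) := by positivity
  set a := l1 - l2 with hadef
  set b := l2 - l3 with hbdef
  have up : I ≤ (K1 * b1 * a1 + K1 * b0 * a2 + K3 * b3 * a3 * 4) *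
      (a ^ (4 * k) * b ^ (2 * k)) * (M / (P ^ k * Q ^ (k + 1) * R ^ (k + 1))) := by
    have nn1 : ∀ m n : ℝ, 0 ≤ ∫ s in l2..l1, Real.exp (-((x2 - x3) * (l1 - s))) * (l1 - s) ^ (m - 1) * (s - l2) ^ (n - 1) := by
      intro m n
      apply intervalIntegral.integral_nonneg h12.le
      intro s hs
      have := Real.rpow_nonneg (by linarith [hs.2] : 0 ≤ l1 - s) (m - 1)
      have := Real.rpow_nonneg (by linarith [hs.1] : 0 ≤ s - l2) (n - 1)
      positivity
    refine TD.2.trans ?_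
    calc _ ≤ (K1 * M * (a ^ (2 * k + 1) / R ^ (k + 1)) * b ^ k) * (b1 * (b ^ (k + 1 + k / 2 - 1) / Q ^ (k + 1))) * (a1 * (a ^ (k + k / 2 - 1) / P ^ k)) +
        (K1 * M * (a ^ (2 * k + 1) / R ^ (k + 1))) * (b0 * (b ^ (k + 1 + k - 1) / Q ^ (k + 1))) * (a2 * (a ^ (k + k - 1) / P ^ k)) +
        (K3 * M * (a ^ (2 * k - 1) / R ^ k) * b ^ k) * (b3 * (b ^ (k + 1 + 1 - 1) / Q ^ (k + 1))) * (a3 * (a ^ (k + 1 + k - 1) / P ^ (k + 1))) := by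
          gcongr
          · exact nn1 _ _
          · exact nn1 _ _
          · exact nn1 _ _
      _ = (K1 * b1 * a1 * M) * (a ^ (2 * k + 1) / R ^ (k + 1) * b ^ k * (b ^ (k + 1 + k / 2 - 1) / Q ^ (k + 1)) * (a ^ (k + k / 2 - 1) / P ^ k)) +
        (K1 * b0 * a2 * M) * (a ^ (2 * k + 1) / R ^ (k + 1) * (b ^ (k + 1 + k - 1) / Q ^ (k + 1)) * (a ^ (k + k - 1) / P ^ k)) +
        (K3 * b3 * a3 * M) * (a ^ (2 * k - 1) / R ^ k * b ^ k * (b ^ (k + 1 + 1 - 1) / Q ^ (k + 1)) * (a ^ (k + 1 + k - 1) / P ^ (k + 1))) := by ring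
      _ ≤ (K1 * b1 * a1 * M) * (a ^ (4 * k) * b ^ (2 * k) / (P ^ k * Q ^ (k + 1) * R ^ (k + 1))) +
        (K1 * b0 * a2 * M) * (a ^ (4 * k) * b ^ (2 * k) / (P ^ k * Q ^ (k + 1) * R ^ (k + 1))) +
        (K3 * b3 * a3 * M) * (4 * (a ^ (4 * k) * b ^ (2 * k) / (P ^ k * Q ^ (k + 1) * R ^ (k + 1)))) := by
          rw [al2]; gcongr
      _ = _ := by ring
  have lo : K0 * b0⁻¹ * a0⁻¹ * (a ^ (4 * k) * b ^ (2 * k)) * (M / (P ^ k * Q ^ (k + 1) * R ^ (k + 1))) ≤ I := by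
    refine le_trans ?_ TD.1
    have e1 : b ^ (2 * k) = b ^ (k + 1 + k - 1) := by congr 1; ring
    have e2 : a ^ (4 * k) = a ^ k * a ^ (k + (2 * k + 1) - 1) := by
      rw [← Real.rpow_add ha]; congr 1; ring
    have nn2 : 0 ≤ ∫ s in l3..l2, Real.exp (-((x3 - x1) * (s - l3))) * (s - l3) ^ (k + 1 - 1) * (l2 - s) ^ (k - 1) :=
      le_trans (by positivity) B0l
    calc _ = (K0 * M * (a ^ k / R ^ (k + 1))) * (b0⁻¹ * (b ^ (k + 1 + k - 1) / Q ^ (k + 1))) * (a0⁻¹ * (a ^ (k + (2 * k + 1) - 1) / P ^ k)) := by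
          rw [e1, e2]; field_simp
      _ ≤ _ := by gcongr
  constructor
  · calc _ ≤ CL * (M / (P ^ k * Q ^ (k + 1) * R ^ (k + 1))) := by
          gcongr
          rw [inv_le_comm₀ (by positivity) CLp]; linarith
      _ = c / (2 ^ (2 * k) * (a ^ (4 * k) * b ^ (2 * k))) *
          (K0 * b0⁻¹ * a0⁻¹ * (a ^ (4 * k) * b ^ (2 * k)) * (M / (P ^ k * Q ^ (k + 1) * R ^ (k + 1)))) := by
          rw [hCL]; field_simp
      _ ≤ c / Vlam l1 l2 l3 ^ (2 * k) * I := by gcongr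
  · calc _ ≤ c / Vlam l1 l2 l3 ^ (2 * k) * ((K1 * b1 * a1 + K1 * b0 * a2 + K3 * b3 * a3 * 4) *
      (a ^ (4 * k) * b ^ (2 * k)) * (M / (P ^ k * Q ^ (k + 1) * R ^ (k + 1)))) := by gcongr
      _ ≤ c / (a ^ (4 * k) * b ^ (2 * k)) * ((K1 * b1 * a1 + K1 * b0 * a2 + K3 * b3 * a3 * 4) *
      (a ^ (4 * k) * b ^ (2 * k)) * (M / (P ^ k * Q ^ (k + 1) * R ^ (k + 1)))) := by gcongr
      _ = CU * (M / (P ^ k * Q ^ (k + 1) * R ^ (k + 1))) := by rw [hCU]; field_simp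
      _ ≤ _ := by
          have : 0 < CL⁻¹ := by positivity
          gcongr; linarith
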